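/- Along any solution l : [0,∞) → ℝ^E of the extended combinatorial Ricci flow, the functional H̃ satisfies (d/dt) H̃(l(t)) = −Σ_{e∈E} K̃_e(l(t))² ≤ 0 for all t ≥ 0; in particular t ↦ H̃(l(t)) is non-increasing. -/

import Mathlib

noncomputable section

open Real Set Filter

/-- The generalized Euclidean triangle angle `aᵢ(x)` opposite the side of length `x i`,
for a generalized triangle with (positive) side lengths `x 0, x 1, x 2`:
it is `π` if `x i ≥ x j + x k`, `0` if some other side is at least the sum of the
remaining two, and otherwise the usual Euclidean angle `arccos((xⱼ²+x_k²−xᵢ²)/(2xⱼx_k))`. -/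
noncomputable def genAngle (x : Fin 3 → ℝ) (i : Fin 3) : ℝ :=
  if x (i + 1) + x (i + 2) ≤ x i then Real.pi
  else if x i + x (i + 2) ≤ x (i + 1) ∨ x i + x (i + 1) ≤ x (i + 2) then 0
  else Real.arccos
    ((x (i + 1) ^ 2 + x (i + 2) ^ 2 - x i ^ 2) / (2 * x (i + 1) * x (i + 2)))

/-- The three side lengths `e^{(l₁₂+l₃₄)/2}, e^{(l₁₃+l₂₄)/2}, e^{(l₁₄+l₂₃)/2}` of the
generalized Euclidean triangle associated to a length vector `l ∈ ℝ⁶`.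
Edge indices: `0 ↔ {1,2}, 1 ↔ {1,3}, 2 ↔ {1,4}, 3 ↔ {2,3}, 4 ↔ {2,4}, 5 ↔ {3,4}`,
so opposite pairs of edges are `(0,5), (1,4), (2,3)`. -/
noncomputable def triSides (l : Fin 6 → ℝ) (k : Fin 3) : ℝ :=
  if k.val = 0 then Real.exp ((l 0 + l 5) / 2)
  else if k.val = 1 then Real.exp ((l 1 + l 4) / 2)
  else Real.exp ((l 2 + l 3) / 2)

/-- The quad (pair of opposite edges) containing the edge `p`. -/
def quadIndex (p : Fin 6) : Fin 3 :=
  if p.val = 0 ∨ p.val = 5 then 0 else if p.val = 1 ∨ p.val = 4 then 1 else 2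

/-- The extended dihedral angle `α_p(l)` of the generalized decorated tetrahedron with
length vector `l ∈ ℝ⁶` at the edge `p`. -/
noncomputable def dihedral (l : Fin 6 → ℝ) (p : Fin 6) : ℝ :=
  genAngle (triSides l) (quadIndex p)

/-- The edge index in `Fin 6` of the edge `{i,j}` of the tetrahedron on vertices `Fin 4`
(junk value for `i = j`). -/
def edgeOf (i j : Fin 4) : Fin 6 :=
  if (i.val = 0 ∧ j.val = 1) ∨ (i.val = 1 ∧ j.val = 0) then 0
  else if (i.val = 0 ∧ j.val = 2) ∨ (i.val = 2 ∧ j.val = 0) then 1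
  else if (i.val = 0 ∧ j.val = 3) ∨ (i.val = 3 ∧ j.val = 0) then 2
  else if (i.val = 1 ∧ j.val = 2) ∨ (i.val = 2 ∧ j.val = 1) then 3
  else if (i.val = 1 ∧ j.val = 3) ∨ (i.val = 3 ∧ j.val = 1) then 4
  else 5

/-- The two endpoints of the edge `p` of the tetrahedron. -/
def endPts (p : Fin 6) : Fin 4 × Fin 4 :=
  if p.val = 0 then (0, 1) else if p.val = 1 then (0, 2) else if p.val = 2 then (0, 3)
  else if p.val = 3 then (1, 2) else if p.val = 4 then (1, 3) else (2, 3)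

/-- The Lobachevsky function `Λ(x) = −∫₀ˣ ln|2 sin t| dt`. -/
noncomputable def lob (x : ℝ) : ℝ := -∫ t in (0:ℝ)..x, Real.log |2 * Real.sin t|

/-- The volume of the generalized decorated tetrahedron with length vector `l`. -/
noncomputable def vol6 (l : Fin 6 → ℝ) : ℝ := (1 / 2 : ℝ) * ∑ p : Fin 6, lob (dihedral l p)

/-- The co-volume function `cov(l) = 2 vol(l) + Σ α_p(l) l_p` on `ℝ⁶`. -/
noncomputable def cov6 (l : Fin 6 → ℝ) : ℝ := 2 * vol6 l + ∑ p : Fin 6, dihedral l p * l p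

/-- `𝓛 ⊂ ℝ⁶`: length vectors of genuine decorated ideal hyperbolic tetrahedra, i.e. those
whose associated generalized Euclidean triangle satisfies the strict triangle inequalities. -/
def Ldom : Set (Fin 6 → ℝ) :=
  {l | ∀ i : Fin 3, triSides l i < triSides l (i + 1) + triSides l (i + 2)}

/-- The action of `w ∈ ℝ⁴` on `l ∈ ℝ⁶`: `(w + l)_{ij} = l_{ij} + wᵢ + wⱼ`. -/
def act (w : Fin 4 → ℝ) (l : Fin 6 → ℝ) : Fin 6 → ℝ :=
  fun p => l p + w (endPts p).1 + w (endPts p).2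

/-- `ℝ̂⁴ = {w + 0 : w ∈ ℝ⁴} ⊂ ℝ⁶`. -/
def hatR4 : Set (Fin 6 → ℝ) := {x | ∃ w : Fin 4 → ℝ, x = act w 0}

/-- `i, j, k, h` are pairwise distinct, i.e. `{i,j,k,h} = {1,2,3,4}`. -/
def Distinct4 (i j k h : Fin 4) : Prop :=
  i ≠ j ∧ i ≠ k ∧ i ≠ h ∧ j ≠ k ∧ j ≠ h ∧ k ≠ h

variable {T E : Type*}

/-- The length vector in `ℝ⁶` induced on the tetrahedron `σ` by a metric `l : E → ℝ`. -/
def pullback (glue : T → Fin 6 → E) (l : E → ℝ) (σ : T) : Fin 6 → ℝ :=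
  fun p => l (glue σ p)

/-- The generalized Ricci curvature `K̃_e(l) = 2π − Σ_{σ} Σ_{p : glue σ p = e} α_p(l_σ)`. -/
noncomputable def Ric [Fintype T] [DecidableEq E] (glue : T → Fin 6 → E) (l : E → ℝ)
    (e : E) : ℝ :=
  2 * Real.pi -
    ∑ σ : T, ∑ p : Fin 6, if glue σ p = e then dihedral (pullback glue l σ) p else 0

/-- `𝓛(M,𝒯)`: the set of decorated hyperbolic polyhedral metrics. -/
def LMdom (glue : T → Fin 6 → E) : Set (E → ℝ) := {l | ∀ σ : T, pullback glue l σ ∈ Ldom}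

/-- `H̃(l) = Σ_σ cov(l_σ) − 2π Σ_e l_e`. -/
noncomputable def Htilde [Fintype T] [Fintype E] (glue : T → Fin 6 → E) (l : E → ℝ) : ℝ :=
  ∑ σ : T, cov6 (pullback glue l σ) - 2 * Real.pi * ∑ e : E, l e

/-- The valence `d_e` of an edge `e`: the number of pairs `(σ, p)` glued to `e`. -/
def valence [Fintype T] [DecidableEq E] (glue : T → Fin 6 → E) (e : E) : ℕ :=
  ∑ σ : T, ∑ p : Fin 6, if glue σ p = e then 1 else 0

/-- `(M,𝒯)` is edge-transitive: any edge can be mapped to any other edge by an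
automorphism of the triangulation. -/
def EdgeTransitive (glue : T → Fin 6 → E) : Prop :=
  ∀ e e' : E, ∃ (φ : T ≃ T) (ψ : E ≃ E) (ρ : T → Fin 4 ≃ Fin 4),
    (∀ (σ : T) (i j : Fin 4), i ≠ j →
      glue (φ σ) (edgeOf (ρ σ i) (ρ σ j)) = ψ (glue σ (edgeOf i j))) ∧ ψ e = e'

/-!
Half of the co-volume of a tetrahedron, as a function of the logarithms `y` of the three side
lengths of its triangle, is a Legendre transform: it is the maximum, over angle triples `b ≥ 0`
with sum `π`, of the volume of the ideal tetrahedron with angles `b` plus `b ⬝ᵥ y`, and the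
generalized angles attain it. For a genuine triangle they are a critical point by the law of sines
and a maximum because the volume is concave on the triples, the second derivative in a direction
`d` of sum zero being `-∑ cot (a i) * d i ^ 2 ≤ 0`. The case of equality in a triangle inequality
follows by continuity, and beyond it the angles stay constant.

Being maximisers, the angles form a subgradient of half the co-volume; as they are continuous, they
are its gradient. Summing over the tetrahedra, the gradient of `Htilde` is `-Ric`, so the flow is
the negative gradient flow of `Htilde`.
-/

open scoped Topology

theorem hasFDerivAt_of_continuousAt_subgradient {V : Type*} [NormedAddCommGroup V]
    [NormedSpace ℝ V] {f : V → ℝ} {g : V → V →L[ℝ] ℝ} {x : V}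
    (hx : ∀ᶠ y in 𝓝 x, f x + g x (y - x) ≤ f y) (hy : ∀ᶠ y in 𝓝 x, f y + g y (x - y) ≤ f x)
    (hg : ContinuousAt g x) : HasFDerivAt f (g x) x := by
  have hgap : (fun y ↦ (g y - g x) (y - x)) =o[𝓝 x] fun y ↦ y - x := by
    have hg' : (fun y ↦ ‖g y - g x‖) =o[𝓝 x] fun _ ↦ (1 : ℝ) :=
      (Asymptotics.isLittleO_one_iff ℝ).2 (tendsto_iff_norm_sub_tendsto_zero.1 hg)
    have hmul : (fun y ↦ ‖g y - g x‖ * ‖y - x‖) =o[𝓝 x] fun y ↦ y - x := by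
      simpa using (hg'.mul_isBigO (Asymptotics.isBigO_refl (fun y ↦ ‖y - x‖) (𝓝 x)))
    refine (Asymptotics.isBigO_of_le _ fun y ↦ ?_).trans_isLittleO hmul
    simpa using (g y - g x).le_opNorm (y - x)
  refine HasFDerivAt.of_isLittleO (Asymptotics.IsBigO.trans_isLittleO ?_ hgap)
  refine Asymptotics.IsBigO.of_bound 1 ?_
  filter_upwards [hx, hy] with y hxy hyx
  have hneg : g y (x - y) = -g y (y - x) := by rw [← map_neg, neg_sub]
  rw [one_mul, Real.norm_of_nonneg (by linarith), sub_apply]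
  exact le_trans (by linarith) (le_abs_self _)

/-- The linear functional `v ↦ c ⬝ᵥ v`, which is the derivative of a function on `ℝ^ι` whose
gradient is `c`. -/
def dotCLM {ι : Type*} [Fintype ι] (c : ι → ℝ) : (ι → ℝ) →L[ℝ] ℝ :=
  ∑ i, c i • ContinuousLinearMap.proj i

@[simp]
theorem dotCLM_apply {ι : Type*} [Fintype ι] (c v : ι → ℝ) : dotCLM c v = c ⬝ᵥ v := by
  simp [dotCLM, dotProduct]

theorem continuous_dotCLM {ι : Type*} [Fintype ι] :
    Continuous (dotCLM : (ι → ℝ) → (ι → ℝ) →L[ℝ] ℝ) :=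
  continuous_finsetSum _ fun i _ ↦ (continuous_apply i).smul continuous_const

theorem sum_fiberSum_mul {ι κ R : Type*} [Fintype ι] [Fintype κ] [DecidableEq κ]
    [NonUnitalNonAssocSemiring R] (g : ι → κ) (a : ι → R) (v : κ → R) :
    ∑ k, (∑ i, if g i = k then a i else 0) * v k = ∑ i, a i * v (g i) := by
  simp_rw [Finset.sum_mul, ite_mul, zero_mul]
  rw [Finset.sum_comm]
  simp

theorem hasDerivAt_comp_add_mul {f : ℝ → ℝ} {f' a d s : ℝ} (hf : HasDerivAt f f' (a + s * d)) :
    HasDerivAt (fun s ↦ f (a + s * d)) (f' * d) s := by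
  have hline : HasDerivAt (fun s ↦ a + s * d) d s := by
    simpa using ((hasDerivAt_id s).mul_const d).const_add a
  exact hf.comp s hline

theorem intervalIntegrable_log_abs_two_mul_sin (a b : ℝ) :
    IntervalIntegrable (fun t ↦ log |2 * sin t|) MeasureTheory.volume a b :=
  MeromorphicOn.intervalIntegrable_log_norm (f := fun t ↦ 2 * sin t) fun _ _ ↦
    (analyticAt_const.mul analyticAt_sin).meromorphicAt

theorem continuous_lob : Continuous lob :=
  (intervalIntegral.continuous_primitive intervalIntegrable_log_abs_two_mul_sin 0).neg

theorem hasDerivAt_lob {x : ℝ} (hx : sin x ≠ 0) : HasDerivAt lob (-log (2 * sin x)) x := by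
  rw [← log_abs]
  have hcont : ContinuousAt (fun t ↦ log |2 * sin t|) x :=
    (continuous_const.mul continuous_sin).abs.continuousAt.log
      (abs_pos.2 (mul_ne_zero two_ne_zero hx)).ne'
  have hmeas : Measurable fun t ↦ log |2 * sin t| :=
    measurable_log.comp (measurable_sin.const_mul 2).abs
  exact (intervalIntegral.integral_hasDerivAt_right (intervalIntegrable_log_abs_two_mul_sin 0 x)
    hmeas.stronglyMeasurable.stronglyMeasurableAtFilter hcont).neg

theorem hasDerivAt_neg_log_two_mul_sin {x : ℝ} (hx : sin x ≠ 0) :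
    HasDerivAt (fun t ↦ -log (2 * sin t)) (-cot x) x := by
  have h := (((hasDerivAt_sin x).const_mul 2).log (by positivity)).neg
  rwa [mul_div_mul_left _ _ two_ne_zero, ← cot_eq_cos_div_sin] at h

section AngleTriples

variable {a b d : Fin 3 → ℝ}

theorem sin_pos_of_sum_eq_pi (ha : ∀ i, 0 < a i) (hsum : ∑ i, a i = π) (i : Fin 3) :
    0 < sin (a i) := by
  rw [Fin.sum_univ_three] at hsum
  refine sin_pos_of_pos_of_lt_pi (ha i) ?_
  fin_cases i <;> dsimp <;> linarith [ha 0, ha 1, ha 2]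

theorem cot_add_cot {x y : ℝ} (hx : sin x ≠ 0) (hy : sin y ≠ 0) :
    cot x + cot y = sin (x + y) / (sin x * sin y) := by
  rw [cot_eq_cos_div_sin, cot_eq_cos_div_sin, sin_add]
  field_simp
  ring

theorem cot_mul_cot_add_cot_mul_cot_add_cot_mul_cot (ha : ∀ i, sin (a i) ≠ 0)
    (hsum : ∑ i, a i = π) :
    cot (a 0) * cot (a 1) + cot (a 1) * cot (a 2) + cot (a 2) * cot (a 0) = 1 := by
  have h2 : a 2 = π - (a 0 + a 1) := by rw [← hsum, Fin.sum_univ_three]; ring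
  have hsin : sin (a 2) = sin (a 0) * cos (a 1) + cos (a 0) * sin (a 1) := by
    rw [h2, sin_pi_sub, sin_add]
  have hcos : cos (a 2) = sin (a 0) * sin (a 1) - cos (a 0) * cos (a 1) := by
    rw [h2, cos_pi_sub, cos_add, neg_sub]
  have := ha 0
  have := ha 1
  have := ha 2
  simp only [cot_eq_cos_div_sin]
  field_simp
  rw [hsin, hcos]
  ring

theorem sum_cot_mul_sq_nonneg (ha : ∀ i, 0 < a i) (hsum : ∑ i, a i = π) (hd : ∑ i, d i = 0) :
    0 ≤ ∑ i, cot (a i) * d i ^ 2 := by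
  have hsin := sin_pos_of_sum_eq_pi ha hsum
  have hcot := cot_mul_cot_add_cot_mul_cot_add_cot_mul_cot (fun i ↦ (hsin i).ne') hsum
  have hpos : 0 < cot (a 0) + cot (a 2) := by
    have h1 : a 0 + a 2 = π - a 1 := by rw [← hsum, Fin.sum_univ_three]; ring
    rw [cot_add_cot (hsin 0).ne' (hsin 2).ne', h1, sin_pi_sub]
    exact div_pos (hsin 1) (mul_pos (hsin 0) (hsin 2))
  rw [Fin.sum_univ_three] at hd ⊢
  -- Complete the square in the binary form left after eliminating `d 2`, whose determinant is `1`.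
  have hsq : (cot (a 0) + cot (a 2)) *
      (cot (a 0) * d 0 ^ 2 + cot (a 1) * d 1 ^ 2 + cot (a 2) * d 2 ^ 2) =
      ((cot (a 0) + cot (a 2)) * d 0 + cot (a 2) * d 1) ^ 2 + d 1 ^ 2 := by
    rw [show d 2 = -(d 0 + d 1) by linarith]
    linear_combination d 1 ^ 2 * hcot
  exact nonneg_of_mul_nonneg_right (hsq ▸ by positivity) hpos

/-- The volume of the ideal hyperbolic tetrahedron with dihedral angles `a 0`, `a 1`, `a 2`, each
of them at a pair of opposite edges. -/
def idealVol (a : Fin 3 → ℝ) : ℝ := ∑ i, lob (a i)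

theorem continuous_idealVol : Continuous idealVol :=
  continuous_finsetSum _ fun i _ ↦ continuous_lob.comp (continuous_apply i)

theorem hasDerivAt_idealVol_line {s : ℝ} (h : ∀ i, sin (a i + s * d i) ≠ 0) :
    HasDerivAt (fun s ↦ idealVol (a + s • d)) (∑ i, -log (2 * sin (a i + s * d i)) * d i) s :=
  HasDerivAt.fun_sum fun i _ ↦ hasDerivAt_comp_add_mul (hasDerivAt_lob (h i))

theorem concaveOn_idealVol_line {S : Set ℝ} (hS : Convex ℝ S)
    (hpos : ∀ s ∈ interior S, ∀ i, 0 < a i + s * d i) (hsum : ∑ i, a i = π)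
    (hd : ∑ i, d i = 0) : ConcaveOn ℝ S fun s ↦ idealVol (a + s • d) := by
  have hsum_line (s : ℝ) : ∑ i, (a i + s * d i) = π := by
    rw [Finset.sum_add_distrib, ← Finset.mul_sum, hsum, hd, mul_zero, add_zero]
  have hsin {s : ℝ} (hs : s ∈ interior S) (i : Fin 3) : sin (a i + s * d i) ≠ 0 :=
    (sin_pos_of_sum_eq_pi (hpos s hs) (hsum_line s) i).ne'
  have hline : Continuous fun s : ℝ ↦ a + s • d :=
    continuous_const.add (continuous_id.smul continuous_const)
  refine concaveOn_of_hasDerivWithinAt2_nonpos hS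
    (f'' := fun s ↦ ∑ i, -cot (a i + s * d i) * d i * d i)
    (continuous_idealVol.comp hline).continuousOn
    (fun s hs ↦ (hasDerivAt_idealVol_line (hsin hs)).hasDerivWithinAt)
    (fun s hs ↦ HasDerivAt.hasDerivWithinAt <| HasDerivAt.fun_sum fun i _ ↦
      (hasDerivAt_comp_add_mul (hasDerivAt_neg_log_two_mul_sin (hsin hs i))).mul_const (d i))
    fun s hs ↦ ?_
  simpa [neg_mul, mul_assoc, ← sq] using sum_cot_mul_sq_nonneg (hpos s hs) (hsum_line s) hd

theorem idealVol_le_tangent (ha : ∀ i, 0 < a i) (ha_sum : ∑ i, a i = π)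
    (hb : ∀ i, 0 ≤ b i) (hb_sum : ∑ i, b i = π) :
    idealVol b ≤ idealVol a - ∑ i, (b i - a i) * log (2 * sin (a i)) := by
  have hd : ∑ i, (b - a) i = 0 := by simp [ha_sum, hb_sum]
  have hpos : ∀ s ∈ interior (Icc (0 : ℝ) 1), ∀ i, 0 < a i + s * (b - a) i := by
    rw [interior_Icc]
    rintro s ⟨hs0, hs1⟩ i
    calc 0 < (1 - s) * a i + s * b i :=
          add_pos_of_pos_of_nonneg (mul_pos (sub_pos.2 hs1) (ha i)) (mul_nonneg hs0.le (hb i))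
      _ = a i + s * (b - a) i := by rw [Pi.sub_apply]; ring
  have hderiv := hasDerivAt_idealVol_line (a := a) (d := b - a) (s := 0) fun i ↦ by
    simpa using (sin_pos_of_sum_eq_pi ha ha_sum i).ne'
  have hslope := (concaveOn_idealVol_line (convex_Icc 0 1) hpos ha_sum hd).slope_le_of_hasDerivAt
    (left_mem_Icc.2 zero_le_one) (right_mem_Icc.2 zero_le_one) one_pos hderiv
  simp only [slope_def_field, one_smul, zero_smul, add_sub_cancel, add_zero, sub_zero, div_one,
    zero_mul, Pi.sub_apply, neg_mul, Finset.sum_neg_distrib] at hslope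
  simp_rw [mul_comm (b _ - a _)]
  linarith

end AngleTriples

/-- The strict triangle inequalities for the side lengths `x 0, x 1, x 2`; they force all three
lengths to be positive. -/
def StrictTriangle (x : Fin 3 → ℝ) : Prop := ∀ i, x i < x (i + 1) + x (i + 2)

/-- Heron's expression: sixteen times the squared area of the triangle with side lengths
`x 0, x 1, x 2`. -/
def heron (x : Fin 3 → ℝ) : ℝ := (∑ i, x i) * ∏ i, (x (i + 1) + x (i + 2) - x i)

section Triangle

variable {x : Fin 3 → ℝ}

theorem strictTriangle_iff (i : Fin 3) :
    StrictTriangle x ↔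
      x i < x (i + 1) + x (i + 2) ∧ x (i + 1) < x (i + 2) + x i ∧ x (i + 2) < x i + x (i + 1) := by
  fin_cases i <;> simp [StrictTriangle, Fin.forall_fin_succ] <;> tauto

theorem StrictTriangle.pos (h : StrictTriangle x) (i : Fin 3) : 0 < x i := by
  obtain ⟨-, h1, h2⟩ := (strictTriangle_iff i).1 h
  linarith

theorem StrictTriangle.heron_pos (h : StrictTriangle x) : 0 < heron x :=
  mul_pos (Finset.sum_pos (fun i _ ↦ h.pos i) Finset.univ_nonempty)
    (Finset.prod_pos fun i _ ↦ sub_pos.2 (h i))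

theorem genAngle_nonneg (x : Fin 3 → ℝ) (i : Fin 3) : 0 ≤ genAngle x i := by
  unfold genAngle
  split_ifs
  exacts [pi_pos.le, le_rfl, arccos_nonneg _]

theorem genAngle_le_pi (x : Fin 3 → ℝ) (i : Fin 3) : genAngle x i ≤ π := by
  unfold genAngle
  split_ifs
  exacts [le_rfl, pi_pos.le, arccos_le_pi _]

theorem genAngle_eq_arccos (hx : ∀ i, 0 < x i) (i : Fin 3) :
    genAngle x i =
      arccos ((x (i + 1) ^ 2 + x (i + 2) ^ 2 - x i ^ 2) / (2 * x (i + 1) * x (i + 2))) := by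
  have h0 := hx i
  have h1 := hx (i + 1)
  have h2 := hx (i + 2)
  unfold genAngle
  split_ifs with hπ h
  · rw [arccos_of_le_neg_one]
    rw [div_le_iff₀ (by positivity)]
    nlinarith
  · rw [arccos_of_one_le]
    rw [one_le_div (by positivity)]
    rcases h with h | h <;> nlinarith
  · rfl

theorem genAngle_of_add_le (hx : ∀ i, 0 < x i) {i : Fin 3} (h : x (i + 1) + x (i + 2) ≤ x i) :
    genAngle x = Pi.single i π := by
  have h0 := hx 0
  have h1 := hx 1
  have h2 := hx 2
  funext j
  fin_cases i <;> fin_cases j <;>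
    simp only [Fin.zero_eta, Fin.mk_one, Fin.reduceFinMk, Fin.reduceAdd, zero_add] at h ⊢ <;>
    grind [genAngle]

theorem StrictTriangle.cos_genAngle (h : StrictTriangle x) (i : Fin 3) :
    cos (genAngle x i) =
      (x (i + 1) ^ 2 + x (i + 2) ^ 2 - x i ^ 2) / (2 * x (i + 1) * x (i + 2)) := by
  have h0 := h.pos i
  have h1 := h.pos (i + 1)
  have h2 := h.pos (i + 2)
  obtain ⟨hi, hi1, hi2⟩ := (strictTriangle_iff i).1 h
  rw [genAngle_eq_arccos h.pos, cos_arccos]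
  · rw [le_div_iff₀ (by positivity)]
    nlinarith
  · rw [div_le_iff₀ (by positivity)]
    nlinarith

theorem StrictTriangle.sq_sin_genAngle (h : StrictTriangle x) (i : Fin 3) :
    (2 * sin (genAngle x i)) ^ 2 = heron x * (x i / ∏ j, x j) ^ 2 := by
  have h0 := h.pos 0
  have h1 := h.pos 1
  have h2 := h.pos 2
  rw [mul_pow, sin_sq, h.cos_genAngle]
  fin_cases i <;>
    simp only [Fin.zero_eta, Fin.mk_one, Fin.reduceFinMk, Fin.reduceAdd, zero_add, heron,
      Fin.sum_univ_three, Fin.prod_univ_three] <;>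
    field_simp <;> ring

theorem StrictTriangle.law_of_sines (h : StrictTriangle x) (i : Fin 3) :
    2 * sin (genAngle x i) = √(heron x) / (∏ j, x j) * x i := by
  have hsin : 0 ≤ 2 * sin (genAngle x i) := mul_nonneg zero_le_two
    (sin_nonneg_of_nonneg_of_le_pi (genAngle_nonneg x i) (genAngle_le_pi x i))
  have hprod : 0 < ∏ j, x j := Finset.prod_pos fun j _ ↦ h.pos j
  rw [← sqrt_sq hsin, h.sq_sin_genAngle, sqrt_mul h.heron_pos.le,
    sqrt_sq (div_nonneg (h.pos i).le hprod.le)]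
  ring

theorem StrictTriangle.sin_genAngle_pos (h : StrictTriangle x) (i : Fin 3) :
    0 < sin (genAngle x i) := by
  have hprod : 0 < ∏ j, x j := Finset.prod_pos fun j _ ↦ h.pos j
  have hpos : 0 < 2 * sin (genAngle x i) := by
    rw [h.law_of_sines]
    exact mul_pos (div_pos (sqrt_pos.2 h.heron_pos) hprod) (h.pos i)
  linarith

theorem StrictTriangle.genAngle_pos (h : StrictTriangle x) (i : Fin 3) : 0 < genAngle x i :=
  (genAngle_nonneg x i).lt_of_ne fun h0 ↦ (h.sin_genAngle_pos i).ne' (by rw [← h0, sin_zero])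

theorem StrictTriangle.sin_add_genAngle (h : StrictTriangle x) :
    sin (genAngle x 0 + genAngle x 1) = sin (genAngle x 2) := by
  have h0 := h.pos 0
  have h1 := h.pos 1
  have h2 := h.pos 2
  have hproj : x 0 * cos (genAngle x 1) + x 1 * cos (genAngle x 0) = x 2 := by
    rw [h.cos_genAngle, h.cos_genAngle]
    simp only [Fin.reduceAdd, zero_add]
    field_simp
    ring
  rw [sin_add]
  linear_combination (cos (genAngle x 1) * h.law_of_sines 0 + cos (genAngle x 0) * h.law_of_sines 1
    - h.law_of_sines 2 + √(heron x) / (∏ j, x j) * hproj) / 2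

theorem StrictTriangle.cos_add_genAngle (h : StrictTriangle x) :
    cos (genAngle x 0 + genAngle x 1) = -cos (genAngle x 2) := by
  have h0 := h.pos 0
  have h1 := h.pos 1
  have h2 := h.pos 2
  have hsin : sin (genAngle x 0) * sin (genAngle x 1) =
      heron x / (4 * x 0 * x 1 * x 2 ^ 2) := by
    calc sin (genAngle x 0) * sin (genAngle x 1)
        = 2 * sin (genAngle x 0) * (2 * sin (genAngle x 1)) / 4 := by ring
      _ = √(heron x) ^ 2 / (∏ j, x j) ^ 2 * x 0 * x 1 / 4 := by
        rw [h.law_of_sines, h.law_of_sines]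
        ring
      _ = heron x / (4 * x 0 * x 1 * x 2 ^ 2) := by
        rw [sq_sqrt h.heron_pos.le, Fin.prod_univ_three]
        field_simp
  rw [cos_add, hsin, h.cos_genAngle, h.cos_genAngle, h.cos_genAngle]
  simp only [zero_add, Fin.reduceAdd, heron, Fin.sum_univ_three, Fin.prod_univ_three]
  field_simp
  ring

theorem StrictTriangle.sum_genAngle (h : StrictTriangle x) : ∑ i, genAngle x i = π := by
  have hlt : genAngle x 0 + genAngle x 1 < π := by
    by_contra! hge
    have hnonneg : 0 ≤ sin (genAngle x 0 + genAngle x 1 - π) :=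
      sin_nonneg_of_nonneg_of_le_pi (sub_nonneg.2 hge)
        (by linarith [genAngle_le_pi x 0, genAngle_le_pi x 1])
    rw [sin_sub_pi, h.sin_add_genAngle] at hnonneg
    linarith [h.sin_genAngle_pos 2]
  have hcos : cos (genAngle x 0 + genAngle x 1) = cos (π - genAngle x 2) := by
    rw [cos_pi_sub, h.cos_add_genAngle]
  have heq : genAngle x 0 + genAngle x 1 = π - genAngle x 2 :=
    injOn_cos ⟨add_nonneg (genAngle_nonneg x 0) (genAngle_nonneg x 1), hlt.le⟩
      ⟨sub_nonneg.2 (genAngle_le_pi x 2), sub_le_self π (genAngle_nonneg x 2)⟩ hcos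
  rw [Fin.sum_univ_three, heq, sub_add_cancel]

theorem sum_genAngle (hx : ∀ i, 0 < x i) : ∑ i, genAngle x i = π := by
  by_cases h : StrictTriangle x
  · exact h.sum_genAngle
  · simp only [StrictTriangle, not_forall, not_lt] at h
    obtain ⟨i, hi⟩ := h
    simp [genAngle_of_add_le hx hi]

end Triangle

/-- The generalized angles of the triangle with side lengths `exp (y i)`, in the logarithmic
coordinates in which the co-volume is differentiated. -/
def expAngle (y : Fin 3 → ℝ) : Fin 3 → ℝ := genAngle fun i ↦ exp (y i)

theorem expAngle_nonneg (y : Fin 3 → ℝ) (i : Fin 3) : 0 ≤ expAngle y i :=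
  genAngle_nonneg _ i

theorem sum_expAngle (y : Fin 3 → ℝ) : ∑ i, expAngle y i = π :=
  sum_genAngle fun i ↦ exp_pos (y i)

theorem continuous_expAngle : Continuous expAngle := by
  refine continuous_pi fun i ↦ ?_
  simp only [expAngle, fun y : Fin 3 → ℝ ↦ genAngle_eq_arccos (fun i ↦ exp_pos (y i)) i]
  exact continuous_arccos.comp (Continuous.div (by fun_prop) (by fun_prop) fun y ↦ by positivity)

theorem expAngle_of_add_le {y : Fin 3 → ℝ} {i : Fin 3}
    (h : exp (y (i + 1)) + exp (y (i + 2)) ≤ exp (y i)) : expAngle y = Pi.single i π :=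
  genAngle_of_add_le (fun i ↦ exp_pos (y i)) h

/-- The co-volume of a generalized ideal tetrahedron in terms of the logarithms `y` of the side
lengths of its triangle, normalised as the Legendre transform of `idealVol`. -/
def triCov (y : Fin 3 → ℝ) : ℝ := idealVol (expAngle y) + expAngle y ⬝ᵥ y

theorem continuous_triCov : Continuous triCov :=
  (continuous_idealVol.comp continuous_expAngle).add (continuous_expAngle.dotProduct continuous_id)

section LegendreTransform

variable {y b : Fin 3 → ℝ}

theorem sum_sub_mul_log_two_mul_sin_expAngle (hy : StrictTriangle fun i ↦ exp (y i))
    (hb_sum : ∑ i, b i = π) :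
    ∑ i, (b i - expAngle y i) * log (2 * sin (expAngle y i)) = b ⬝ᵥ y - expAngle y ⬝ᵥ y := by
  have hprod : 0 < ∏ i, exp (y i) := Finset.prod_pos fun i _ ↦ exp_pos (y i)
  set c := √(heron fun i ↦ exp (y i)) / ∏ i, exp (y i) with hc
  have hc_pos : 0 < c := div_pos (sqrt_pos.2 hy.heron_pos) hprod
  have hlog (i : Fin 3) : log (2 * sin (expAngle y i)) = log c + y i := by
    rw [expAngle, hy.law_of_sines, ← hc, log_mul hc_pos.ne' (exp_pos _).ne', log_exp]
  simp_rw [hlog, mul_add, Finset.sum_add_distrib, ← Finset.sum_mul, Finset.sum_sub_distrib, hb_sum,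
    sum_expAngle, sub_mul, Finset.sum_sub_distrib]
  simp [dotProduct]

theorem StrictTriangle.idealVol_add_dotProduct_le_triCov (hy : StrictTriangle fun i ↦ exp (y i))
    (hb : ∀ i, 0 ≤ b i) (hb_sum : ∑ i, b i = π) : idealVol b + b ⬝ᵥ y ≤ triCov y := by
  have htangent := idealVol_le_tangent hy.genAngle_pos (sum_expAngle y) hb hb_sum
  have hgrad := sum_sub_mul_log_two_mul_sin_expAngle hy hb_sum
  rw [← expAngle, hgrad] at htangent
  rw [triCov]
  linarith

theorem idealVol_add_dotProduct_le_triCov_of_exp_eq {i : Fin 3}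
    (hy : exp (y i) = exp (y (i + 1)) + exp (y (i + 2)))
    (hb : ∀ i, 0 ≤ b i) (hb_sum : ∑ i, b i = π) : idealVol b + b ⬝ᵥ y ≤ triCov y := by
  -- Shrinking the longest side `i` slightly gives genuine triangles degenerating to the given one.
  let path (s : ℝ) : Fin 3 → ℝ := Function.update y i s
  have hpath : Continuous path := continuous_const.update i continuous_id
  have hclosed : IsClosed {s | idealVol b + b ⬝ᵥ path s ≤ triCov (path s)} :=
    isClosed_le (continuous_const.add (continuous_const.dotProduct hpath))
      (continuous_triCov.comp hpath)
  have hlt : max (y (i + 1)) (y (i + 2)) < y i := by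
    rw [max_lt_iff, ← exp_lt_exp, ← exp_lt_exp (x := y (i + 2)), hy]
    exact ⟨lt_add_of_pos_right _ (exp_pos _), lt_add_of_pos_left _ (exp_pos _)⟩
  have hstrict : ∀ s ∈ Ioo (max (y (i + 1)) (y (i + 2))) (y i),
      StrictTriangle fun j ↦ exp (path s j) := by
    rintro s ⟨hs, hsy⟩
    obtain ⟨h1, h2⟩ := max_lt_iff.1 hs
    rw [← exp_lt_exp] at h1 h2 hsy
    rw [strictTriangle_iff i]
    simp only [path, Function.update_self, Function.update_of_ne (show i + 1 ≠ i by simp),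
      Function.update_of_ne (show i + 2 ≠ i by simp)]
    refine ⟨?_, ?_, ?_⟩ <;> linarith [exp_pos (y (i + 1)), exp_pos (y (i + 2))]
  have hmem : y i ∈ closure (Ioo (max (y (i + 1)) (y (i + 2))) (y i)) := by
    rw [closure_Ioo hlt.ne]
    exact right_mem_Icc.2 hlt.le
  have hle := closure_minimal
    (fun s hs ↦ (hstrict s hs).idealVol_add_dotProduct_le_triCov hb hb_sum) hclosed hmem
  rwa [← show path (y i) = y from Function.update_eq_self i y]

theorem idealVol_add_dotProduct_le_triCov_of_add_le {i : Fin 3}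
    (hy : exp (y (i + 1)) + exp (y (i + 2)) ≤ exp (y i))
    (hb : ∀ i, 0 ≤ b i) (hb_sum : ∑ i, b i = π) : idealVol b + b ⬝ᵥ y ≤ triCov y := by
  have hpos : 0 < exp (y (i + 1)) + exp (y (i + 2)) := add_pos (exp_pos _) (exp_pos _)
  -- Shrinking side `i` to the sum of the others keeps the angles and lowers the right-hand side by
  -- `π * t`, the left-hand side by `b i * t ≤ π * t`.
  let t := y i - log (exp (y (i + 1)) + exp (y (i + 2)))
  let z := y - Pi.single i t
  have ht : 0 ≤ t := sub_nonneg.2 ((log_le_iff_le_exp hpos).2 hy)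
  have hz : exp (z i) = exp (z (i + 1)) + exp (z (i + 2)) := by
    simp [z, t, exp_log hpos]
  have hz_le := idealVol_add_dotProduct_le_triCov_of_exp_eq hz hb hb_sum
  have hbi : b i ≤ π := hb_sum ▸ Finset.single_le_sum (fun j _ ↦ hb j) (Finset.mem_univ i)
  have hmul : b i * t ≤ π * t := mul_le_mul_of_nonneg_right hbi ht
  rw [triCov, expAngle_of_add_le hz.ge] at hz_le
  rw [triCov, expAngle_of_add_le hy]
  simp only [z, dotProduct_sub, dotProduct_single, Pi.single_eq_same] at hz_le
  linarith

theorem idealVol_add_dotProduct_le_triCov (y : Fin 3 → ℝ)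
    (hb : ∀ i, 0 ≤ b i) (hb_sum : ∑ i, b i = π) : idealVol b + b ⬝ᵥ y ≤ triCov y := by
  by_cases h : StrictTriangle fun i ↦ exp (y i)
  · exact h.idealVol_add_dotProduct_le_triCov hb hb_sum
  · simp only [StrictTriangle, not_forall, not_lt] at h
    obtain ⟨i, hi⟩ := h
    exact idealVol_add_dotProduct_le_triCov_of_add_le hi hb hb_sum

end LegendreTransform

theorem triCov_add_dotProduct_le (y z : Fin 3 → ℝ) :
    triCov y + expAngle y ⬝ᵥ (z - y) ≤ triCov z := by
  have hle := idealVol_add_dotProduct_le_triCov z (expAngle_nonneg y) (sum_expAngle y)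
  rw [triCov, dotProduct_sub]
  linarith

theorem hasFDerivAt_triCov (y : Fin 3 → ℝ) : HasFDerivAt triCov (dotCLM (expAngle y)) y :=
  hasFDerivAt_of_continuousAt_subgradient (g := fun y ↦ dotCLM (expAngle y))
    (.of_forall fun z ↦ by simpa using triCov_add_dotProduct_le y z)
    (.of_forall fun z ↦ by simpa using triCov_add_dotProduct_le z y)
    (continuous_dotCLM.comp continuous_expAngle).continuousAt

/-- The logarithms of the three side lengths `triSides l`, that is, the half sums of the lengths of
opposite edges, as a continuous linear function of `l`. -/
def logSides : (Fin 6 → ℝ) →L[ℝ] (Fin 3 → ℝ) :=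
  .pi fun k ↦ (1 / 2 : ℝ) • dotCLM fun p ↦ if quadIndex p = k then 1 else 0

theorem triSides_eq_exp_logSides (l : Fin 6 → ℝ) : triSides l = fun k ↦ exp (logSides l k) := by
  funext k
  fin_cases k <;>
    simp [triSides, logSides, dotProduct, quadIndex, Fin.sum_univ_six] <;> ring

theorem dihedral_eq_expAngle (l : Fin 6 → ℝ) (p : Fin 6) :
    dihedral l p = expAngle (logSides l) (quadIndex p) := by
  rw [dihedral, triSides_eq_exp_logSides, expAngle]

theorem two_mul_dotProduct_logSides (c : Fin 3 → ℝ) (l : Fin 6 → ℝ) :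
    2 * (c ⬝ᵥ logSides l) = ∑ p, c (quadIndex p) * l p := by
  have hdouble (k : Fin 3) : 2 * logSides l k = ∑ p, if quadIndex p = k then l p else 0 := by
    simp [logSides, dotProduct]
  simp_rw [dotProduct, Finset.mul_sum, mul_left_comm, hdouble, mul_comm (c _)]
  exact sum_fiberSum_mul quadIndex l c

theorem sum_quadIndex (f : Fin 3 → ℝ) : ∑ p, f (quadIndex p) = 2 * ∑ k, f k := by
  rw [Fin.sum_univ_six, Fin.sum_univ_three]
  change f 0 + f 1 + f 2 + f 2 + f 1 + f 0 = _
  ring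

theorem cov6_eq_two_mul_triCov (l : Fin 6 → ℝ) : cov6 l = 2 * triCov (logSides l) := by
  simp_rw [cov6, vol6, dihedral_eq_expAngle]
  rw [sum_quadIndex fun k ↦ lob (expAngle (logSides l) k), ← two_mul_dotProduct_logSides, triCov,
    idealVol]
  ring

theorem hasFDerivAt_cov6 (l : Fin 6 → ℝ) : HasFDerivAt cov6 (dotCLM (dihedral l)) l := by
  have h := ((hasFDerivAt_triCov (logSides l)).comp l logSides.hasFDerivAt).const_mul 2
  rw [funext cov6_eq_two_mul_triCov]
  refine h.congr_fderiv (ContinuousLinearMap.ext fun v ↦ ?_)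
  simpa [dihedral_eq_expAngle, dotProduct] using
    two_mul_dotProduct_logSides (expAngle (logSides l)) v

theorem Ric_dotProduct [Fintype T] [Fintype E] [DecidableEq E] (glue : T → Fin 6 → E)
    (l v : E → ℝ) : Ric glue l ⬝ᵥ v =
      2 * π * ∑ e, v e - ∑ σ, dihedral (pullback glue l σ) ⬝ᵥ pullback glue v σ := by
  simp only [dotProduct, Ric, sub_mul, Finset.sum_sub_distrib, ← Finset.mul_sum]
  congr 1
  simp only [Finset.sum_mul (s := Finset.univ (α := T))]
  rw [Finset.sum_comm]
  exact Finset.sum_congr rfl fun σ _ ↦ sum_fiberSum_mul (glue σ) _ v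

theorem hasFDerivAt_Htilde [Fintype T] [Fintype E] [DecidableEq E] (glue : T → Fin 6 → E)
    (l : E → ℝ) : HasFDerivAt (Htilde glue) (-dotCLM (Ric glue l)) l := by
  have hpull (σ : T) : HasFDerivAt (fun l : E → ℝ ↦ pullback glue l σ)
      (ContinuousLinearMap.pi fun p ↦ ContinuousLinearMap.proj (glue σ p)) l :=
    hasFDerivAt_pi.2 fun p ↦ hasFDerivAt_apply (𝕜 := ℝ) (F' := fun _ : E ↦ ℝ) (glue σ p) l
  have hcov (σ : T) := (hasFDerivAt_cov6 (pullback glue l σ)).comp l (hpull σ)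
  have hsum : HasFDerivAt (fun l : E → ℝ ↦ ∑ e, l e) (dotCLM 1) l :=
    (dotCLM 1).hasFDerivAt.congr_of_eventuallyEq (.of_forall fun l ↦ by simp [one_dotProduct])
  have hH := (HasFDerivAt.fun_sum (u := Finset.univ) fun σ _ ↦ hcov σ).sub
    (hsum.const_mul (2 * π))
  refine hH.congr_fderiv (ContinuousLinearMap.ext fun v ↦ ?_)
  simp only [sub_apply, sum_apply, ContinuousLinearMap.comp_apply, dotCLM_apply, smul_apply,
    one_dotProduct, smul_eq_mul, neg_apply, Ric_dotProduct, neg_sub]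
  rfl

/-- along any solution of the extended combinatorial Ricci flow,
`(d/dt) H̃(l(t)) = −Σ_e K̃_e(l(t))² ≤ 0`, so `H̃(l(t))` is non-increasing on `[0,∞)`. -/
theorem Htilde_nonincreasing_along_flow
    [Fintype T] [Fintype E] [DecidableEq E] [Nonempty T] (glue : T → Fin 6 → E)
    (l : ℝ → E → ℝ) (hflow : ∀ t : ℝ, 0 ≤ t → HasDerivAt l (Ric glue (l t)) t) :
    (∀ t : ℝ, 0 ≤ t →
      HasDerivAt (fun s => Htilde glue (l s)) (-∑ e : E, (Ric glue (l t) e) ^ 2) t ∧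
      (-∑ e : E, (Ric glue (l t) e) ^ 2) ≤ 0) ∧
    AntitoneOn (fun t => Htilde glue (l t)) (Set.Ici 0) := by
  have hderiv (t : ℝ) (ht : 0 ≤ t) :
      HasDerivAt (fun s ↦ Htilde glue (l s)) (-∑ e : E, (Ric glue (l t) e) ^ 2) t :=
    ((hasFDerivAt_Htilde glue (l t)).comp_hasDerivAt t (hflow t ht)).congr_deriv
      (by simp [dotProduct, sq])
  have hnonpos (t : ℝ) : -∑ e : E, (Ric glue (l t) e) ^ 2 ≤ 0 :=
    neg_nonpos.2 (Finset.sum_nonneg fun e _ ↦ sq_nonneg _)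
  refine ⟨fun t ht ↦ ⟨hderiv t ht, hnonpos t⟩, ?_⟩
  refine antitoneOn_of_hasDerivWithinAt_nonpos (convex_Ici 0)
    (fun t ht ↦ (hderiv t ht).continuousAt.continuousWithinAt) (fun t ht ↦ ?_) fun t _ ↦ hnonpos t
  exact (hderiv t (interior_subset ht)).hasDerivWithinAt
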